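/- Let D ≥ 2, let P be the swap operator on ℂ^D ⊗ ℂ^D, P_sym = (I_{D²} + P)/2, P_as = (I_{D²} − P)/2, and for 0 ≤ p ≤ 1 let ρ_W = p·(2/(D²+D))·P_sym + (1−p)·(2/(D²−D))·P_as. Then for every D×D unitary U, with β = Tr(U)·Tr(U†) (a nonnegative real), the Fu distance satisfies d(ρ_W, U) = √( (2pD − D − 1)² · (D² − β) ) / ( D·(D² − 1) ). -/

import Mathlib

/-!
The identity part of the Werner state commutes with `V = 1 ⊗ U`, so only the coefficient
`b = (2pD - D - 1) / (D(D² - 1))` of the swap `P` contributes to `ρ - ρ_f`. Moving `Vᴴ` through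
the swap (`swapP_mul`) turns `V P Vᴴ` into `W P` with `W = Uᴴ ⊗ U` unitary, hence
`ρ - ρ_f = b (1 - W) P`. As `P` is a Hermitian involution, the squared Frobenius norm is
`b² Tr((1 - W)ᴴ (1 - W)) = 2 b² (D² - Re Tr W)`, and `Tr W = |Tr U|²`.
-/

noncomputable section
open Matrix Kronecker ComplexOrder

/-- The state after applying `I_M ⊗ U` to `ρ`. -/
def rhoF {M N : ℕ} (ρ : Matrix (Fin M × Fin N) (Fin M × Fin N) ℂ)
    (U : Matrix (Fin N) (Fin N) ℂ) : Matrix (Fin M × Fin N) (Fin M × Fin N) ℂ :=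
  ((1 : Matrix (Fin M) (Fin M) ℂ) ⊗ₖ U) * ρ * ((1 : Matrix (Fin M) (Fin M) ℂ) ⊗ₖ U)ᴴ

/-- The Fu distance `d(ρ,U) = (1/√2) ‖ρ - ρ_f‖_F`, with Frobenius norm
`‖A‖_F = √(Tr(AᴴA))`. -/
def fuDist {M N : ℕ} (ρ : Matrix (Fin M × Fin N) (Fin M × Fin N) ℂ)
    (U : Matrix (Fin N) (Fin N) ℂ) : ℝ :=
  (1 / Real.sqrt 2) * Real.sqrt (((ρ - rhoF ρ U)ᴴ * (ρ - rhoF ρ U)).trace.re)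

/-- The reduced state `ρ_B = Tr_A ρ`. -/
def ptrA {M N : ℕ} (ρ : Matrix (Fin M × Fin N) (Fin M × Fin N) ℂ) :
    Matrix (Fin N) (Fin N) ℂ :=
  Matrix.of fun k l => ∑ i, ρ (i, k) (i, l)

/-- `d_max(ρ)`: supremum of the Fu distance over all cyclic unitaries on subsystem B. -/
def dmax {M N : ℕ} (ρ : Matrix (Fin M × Fin N) (Fin M × Fin N) ℂ) : ℝ :=
  sSup {x : ℝ | ∃ U : Matrix (Fin N) (Fin N) ℂ,
    U ∈ Matrix.unitaryGroup (Fin N) ℂ ∧ U * ptrA ρ = ptrA ρ * U ∧ x = fuDist ρ U}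

/-- The swap operator `P` on `ℂ^D ⊗ ℂ^D`, with entries
`P_{(i,k),(j,l)} = δ_{i,l} δ_{k,j}`. -/
def swapP (D : ℕ) : Matrix (Fin D × Fin D) (Fin D × Fin D) ℂ :=
  Matrix.of fun q r => if q.1 = r.2 ∧ q.2 = r.1 then 1 else 0

/-- The Werner state `ρ_W = p (2/(D²+D)) P_sym + (1-p) (2/(D²-D)) P_as`. -/
def werner (D : ℕ) (p : ℝ) : Matrix (Fin D × Fin D) (Fin D × Fin D) ℂ :=
  (p * (2 / ((D : ℝ) ^ 2 + D))) • ((1 / 2 : ℝ) • (1 + swapP D)) +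
    ((1 - p) * (2 / ((D : ℝ) ^ 2 - D))) • ((1 / 2 : ℝ) • (1 - swapP D))

/-- The swap exchanges the two tensor factors, so it carries an operator on the second
factor to the same operator on the first. -/
theorem swapP_mul {D : ℕ} (A : Matrix (Fin D) (Fin D) ℂ) :
    swapP D * ((1 : Matrix (Fin D) (Fin D) ℂ) ⊗ₖ A) = (A ⊗ₖ 1) * swapP D := by
  ext ⟨i, k⟩ ⟨j, l⟩
  simp only [Matrix.mul_apply, swapP, Matrix.of_apply, Matrix.kroneckerMap_apply,
    Fintype.sum_prod_type, Matrix.one_apply, ite_and]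
  simp [eq_comm, mul_comm]

theorem swapP_sq (D : ℕ) : swapP D * swapP D = 1 := by
  ext ⟨i, k⟩ ⟨j, l⟩
  simp only [Matrix.mul_apply, swapP, Matrix.of_apply,
    Fintype.sum_prod_type, Matrix.one_apply, ite_and, Prod.mk.injEq]
  simp [eq_comm]

theorem swapP_conjTranspose (D : ℕ) : (swapP D)ᴴ = swapP D := by
  ext ⟨i, k⟩ ⟨j, l⟩
  simp only [Matrix.conjTranspose_apply, swapP, Matrix.of_apply]
  split_ifs <;> simp_all

/-- The coefficient of the identity is left unspecified: that part is invariant under local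
unitaries and does not affect the Fu distance. -/
theorem werner_eq {D : ℕ} (hD : 2 ≤ D) (p : ℝ) : ∃ a : ℝ, werner D p =
    (a : ℂ) • 1 + (((2 * p * D - D - 1) / ((D : ℝ) * ((D : ℝ) ^ 2 - 1)) : ℝ) : ℂ) • swapP D := by
  refine ⟨p / ((D : ℝ) ^ 2 + D) + (1 - p) / ((D : ℝ) ^ 2 - D), ?_⟩
  have h2 : (2 : ℝ) ≤ D := by exact_mod_cast hD
  have hb : (2 * p * D - D - 1) / ((D : ℝ) * ((D : ℝ) ^ 2 - 1)) =
      p / ((D : ℝ) ^ 2 + D) - (1 - p) / ((D : ℝ) ^ 2 - D) := by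
    have e1 : (D : ℝ) ^ 2 + D = D * (D + 1) := by ring
    have e2 : (D : ℝ) ^ 2 - D = D * (D - 1) := by ring
    have e3 : (D : ℝ) ^ 2 - 1 = (D + 1) * (D - 1) := by ring
    have n1 : (D : ℝ) ≠ 0 := by linarith
    have n2 : (D : ℝ) + 1 ≠ 0 := by linarith
    have n3 : (D : ℝ) - 1 ≠ 0 := by linarith
    rw [e1, e2, e3]
    field_simp
    ring
  rw [hb, werner]
  ext x y
  simp only [Matrix.add_apply, Matrix.smul_apply, Matrix.sub_apply, Complex.real_smul,
    smul_eq_mul]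
  push_cast
  ring

theorem sub_rhoF {D : ℕ} (a b : ℂ) (U : Matrix (Fin D) (Fin D) ℂ)
    (hU : U ∈ Matrix.unitaryGroup (Fin D) ℂ) :
    (a • 1 + b • swapP D) - rhoF (a • 1 + b • swapP D) U =
      b • ((1 - Uᴴ ⊗ₖ U) * swapP D) := by
  have hUU : U * Uᴴ = 1 := Matrix.mem_unitaryGroup_iff.mp hU
  have hV : ((1 : Matrix (Fin D) (Fin D) ℂ) ⊗ₖ U) * ((1 : Matrix (Fin D) (Fin D) ℂ) ⊗ₖ U)ᴴ
      = 1 := by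
    rw [Matrix.conjTranspose_kronecker, ← Matrix.mul_kronecker_mul, hUU]
    simp
  have hP : ((1 : Matrix (Fin D) (Fin D) ℂ) ⊗ₖ U) * swapP D *
      ((1 : Matrix (Fin D) (Fin D) ℂ) ⊗ₖ U)ᴴ = (Uᴴ ⊗ₖ U) * swapP D := by
    rw [Matrix.conjTranspose_kronecker, Matrix.conjTranspose_one, Matrix.mul_assoc, swapP_mul,
      ← Matrix.mul_assoc, ← Matrix.mul_kronecker_mul, one_mul, mul_one]
  rw [rhoF, Matrix.mul_add, Matrix.add_mul, Matrix.mul_smul, Matrix.mul_smul, Matrix.smul_mul,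
    Matrix.smul_mul, Matrix.mul_one, hV, hP, Matrix.sub_mul, Matrix.one_mul, smul_sub]
  abel

theorem trace_sub_mul_swapP {D : ℕ} (U : Matrix (Fin D) (Fin D) ℂ)
    (hU : U ∈ Matrix.unitaryGroup (Fin D) ℂ) :
    (((1 - Uᴴ ⊗ₖ U) * swapP D)ᴴ * ((1 - Uᴴ ⊗ₖ U) * swapP D)).trace =
      ((2 * ((D : ℝ) ^ 2 - Complex.normSq U.trace) : ℝ) : ℂ) := by
  have hUU : U * Uᴴ = 1 := Matrix.mem_unitaryGroup_iff.mp hU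
  have hUU' : Uᴴ * U = 1 := Matrix.mem_unitaryGroup_iff'.mp hU
  have hW : (Uᴴ ⊗ₖ U)ᴴ * (Uᴴ ⊗ₖ U) = 1 := by
    rw [Matrix.conjTranspose_kronecker, ← Matrix.mul_kronecker_mul,
      Matrix.conjTranspose_conjTranspose, hUU, hUU']
    simp
  have hT : (Uᴴ ⊗ₖ U).trace = (Complex.normSq U.trace : ℂ) := by
    rw [Matrix.trace_kronecker, Matrix.trace_conjTranspose, Complex.normSq_eq_conj_mul_self]
    rfl
  rw [Matrix.conjTranspose_mul, swapP_conjTranspose, Matrix.mul_assoc, Matrix.trace_mul_comm,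
    Matrix.mul_assoc, Matrix.mul_assoc, swapP_sq, Matrix.mul_one, Matrix.conjTranspose_sub,
    Matrix.conjTranspose_one, Matrix.sub_mul, Matrix.mul_sub, Matrix.mul_sub, hW]
  simp only [Matrix.mul_one, Matrix.one_mul, Matrix.trace_sub, Matrix.trace_conjTranspose, hT,
    Matrix.trace_one, Fintype.card_prod, Fintype.card_fin]
  simp only [Complex.star_def, Complex.conj_ofReal]
  push_cast
  ring

theorem stmt7 {D : ℕ} (hD : 2 ≤ D) (p : ℝ) (hp0 : 0 ≤ p) (hp1 : p ≤ 1)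
    (U : Matrix (Fin D) (Fin D) ℂ) (hU : U ∈ Matrix.unitaryGroup (Fin D) ℂ) :
    fuDist (werner D p) U =
      Real.sqrt ((2 * p * D - D - 1) ^ 2 * ((D : ℝ) ^ 2 - Complex.normSq U.trace)) /
        ((D : ℝ) * ((D : ℝ) ^ 2 - 1)) := by
  obtain ⟨a, ha⟩ := werner_eq hD p
  have h2 : (2 : ℝ) ≤ D := by exact_mod_cast hD
  have hpos : 0 < (D : ℝ) * ((D : ℝ) ^ 2 - 1) := by
    have : 0 < (D : ℝ) ^ 2 - 1 := by nlinarith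
    positivity
  rw [fuDist, ha, sub_rhoF _ _ U hU, Matrix.conjTranspose_smul, Matrix.smul_mul,
    Matrix.mul_smul, Matrix.trace_smul, Matrix.trace_smul, trace_sub_mul_swapP U hU,
    Complex.star_def, Complex.conj_ofReal, smul_eq_mul, smul_eq_mul, ← Complex.ofReal_mul,
    ← Complex.ofReal_mul, Complex.ofReal_re, one_div_mul_eq_div,
    ← Real.sqrt_div' _ (by norm_num : (0 : ℝ) ≤ 2)]
  generalize (D : ℝ) * ((D : ℝ) ^ 2 - 1) = c at hpos ⊢
  conv_rhs => rw [← Real.sqrt_sq hpos.le, ← Real.sqrt_div' _ (sq_nonneg c)]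
  congr 1
  field_simp
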